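/- Let G be a set of lines as in the context and let t_0, t ∈ ℝ with t_0 ≠ t. Define V = {(x, y, z) ∈ (ℝ^{d−1})^3 : there exist (ξ_1, x_1), (ξ_2, x_2) ∈ G_X with x_1 + t_0 ξ_1 = x_2 + t_0 ξ_2 = x, x_1 + t ξ_1 = y, and x_2 + t ξ_2 = z}. Then, with all measures interpreted as Lebesgue outer measures, ℒ^{3(d−1)}(V) · ℒ^{d−1}(π_{t_0}(G)) ≥ |t_0 − t|^{2(d−1)} · |G|^2. -/

import Mathlib

open MeasureTheory ENNReal

noncomputable section

/-- `ℝ^{d-1}`, identified with the hyperplane `H` in `ℝ^d`. -/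
abbrev Euc (n : ℕ) := EuclideanSpace ℝ (Fin n)

/-- The slice `π_t(G) = {x + tξ : (ξ,x) ∈ G_X}` of a set of lines `G`. -/
def lineSlice {n : ℕ} (G : Set (Euc n × Euc n)) (t : ℝ) : Set (Euc n) :=
  {y | ∃ w ∈ G, y = w.2 + t • w.1}

/-- `m(G) = sup_ξ ℒ^{d-1}({x : (ξ,x) ∈ G_X})`. -/
def mG {n : ℕ} (G : Set (Euc n × Euc n)) : ℝ≥0∞ :=
  ⨆ ξ : Euc n, volume {x : Euc n | (ξ, x) ∈ G}

/-!
A line is determined by its two points at heights `t₀` and `t`. The passage from `(ξ, x)` to this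
pair is linear with determinant `(t₀ - t) ^ (d - 1)`, and it carries `G` to a set `S` of pairs whose
projection to the first coordinate is the slice at height `t₀`. In these coordinates `V` is the
fibre product of `S` with itself over that slice, so its measure is the integral of the squared
measures of the fibres of `S`. Cauchy–Schwarz over the slice compares this integral with the square
of the measure of `S`.
-/

section HolderSupport

variable {α : Type*} [MeasurableSpace α] {μ : Measure α} {f : α → ℝ≥0∞} {p : ℝ}

lemma lintegral_rpow_le_lintegral_rpow_mul_measure_support (hp : 1 ≤ p) (hf : AEMeasurable f μ) :
    (∫⁻ a, f a ∂μ) ^ p ≤ (∫⁻ a, f a ^ p ∂μ) * μ (Function.support f) ^ (p - 1) := by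
  have hp₀ : 0 < p := one_pos.trans_le hp
  have holder : ∫⁻ a in f.support, f a ∂μ ≤
      (∫⁻ a in f.support, f a ^ p ∂μ) ^ p⁻¹ * μ f.support ^ (1 - p⁻¹) := by
    simpa [eLpNorm'] using
      eLpNorm'_le_eLpNorm'_mul_rpow_measure_univ one_pos hp hf.restrict.aestronglyMeasurable
  calc (∫⁻ a, f a ∂μ) ^ p
      = (∫⁻ a in f.support, f a ∂μ) ^ p := by rw [setLIntegral_eq_of_support_subset subset_rfl]
    _ ≤ ((∫⁻ a in f.support, f a ^ p ∂μ) ^ p⁻¹ * μ f.support ^ (1 - p⁻¹)) ^ p := by gcongr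
    _ = (∫⁻ a in f.support, f a ^ p ∂μ) * μ f.support ^ (p - 1) := by
      rw [mul_rpow_of_nonneg _ _ hp₀.le, rpow_inv_rpow hp₀.ne', ← rpow_mul, sub_mul, one_mul,
        inv_mul_cancel₀ hp₀.ne']
    _ ≤ (∫⁻ a, f a ^ p ∂μ) * μ f.support ^ (p - 1) := by
      gcongr
      exact Measure.restrict_le_self

end HolderSupport

section FiberSquare

variable {α β : Type*} {S T : Set (α × β)}

/-- The fibre product `S ×_α S` of `S ⊆ α × β` with itself over the first coordinate. -/
def fiberSquare (S : Set (α × β)) : Set (α × β × β) :=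
  {w | (w.1, w.2.1) ∈ S ∧ (w.1, w.2.2) ∈ S}

@[gcongr]
lemma fiberSquare_mono (h : S ⊆ T) : fiberSquare S ⊆ fiberSquare T :=
  fun _ hw => ⟨h hw.1, h hw.2⟩

variable [MeasurableSpace β]

lemma support_measure_section_subset (ν : Measure β) (S : Set (α × β)) :
    Function.support (fun a => ν (Prod.mk a ⁻¹' S)) ⊆ Prod.fst '' S := by
  intro a ha
  obtain ⟨b, hb⟩ := nonempty_of_measure_ne_zero ha
  exact ⟨(a, b), hb, rfl⟩

variable [MeasurableSpace α] {μ : Measure α} {ν : Measure β}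

lemma measurableSet_fiberSquare (hS : MeasurableSet S) : MeasurableSet (fiberSquare S) :=
  (hS.preimage (by fun_prop : Measurable fun w : α × β × β => (w.1, w.2.1))).inter
    (hS.preimage (by fun_prop : Measurable fun w : α × β × β => (w.1, w.2.2)))

lemma measure_fiberSquare [SFinite ν] (hS : MeasurableSet S) :
    μ.prod (ν.prod ν) (fiberSquare S) = ∫⁻ a, ν (Prod.mk a ⁻¹' S) ^ 2 ∂μ := by
  rw [Measure.prod_apply (measurableSet_fiberSquare hS)]
  refine lintegral_congr fun a => ?_
  have section_eq : Prod.mk a ⁻¹' fiberSquare S = (Prod.mk a ⁻¹' S) ×ˢ (Prod.mk a ⁻¹' S) := rfl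
  rw [section_eq, Measure.prod_prod, sq]

theorem sq_measure_le_measure_fiberSquare_mul [SFinite ν] (hS : NullMeasurableSet S (μ.prod ν)) :
    μ.prod ν S ^ 2 ≤ μ.prod (ν.prod ν) (fiberSquare S) * μ (Prod.fst '' S) := by
  obtain ⟨T, hTS, hT, hTae⟩ := hS.exists_measurable_subset_ae_eq
  calc μ.prod ν S ^ 2
      = (∫⁻ a, ν (Prod.mk a ⁻¹' T) ∂μ) ^ 2 := by
        rw [← measure_congr hTae, Measure.prod_apply hT]
    _ ≤ (∫⁻ a, ν (Prod.mk a ⁻¹' T) ^ 2 ∂μ) *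
          μ (Function.support fun a => ν (Prod.mk a ⁻¹' T)) := by
        simpa only [rpow_two, (by norm_num : (2 : ℝ) - 1 = 1), rpow_one] using
          lintegral_rpow_le_lintegral_rpow_mul_measure_support one_le_two
            (measurable_measure_prodMk_left hT).aemeasurable
    _ = μ.prod (ν.prod ν) (fiberSquare T) *
          μ (Function.support fun a => ν (Prod.mk a ⁻¹' T)) := by
        rw [measure_fiberSquare hT]
    _ ≤ μ.prod (ν.prod ν) (fiberSquare S) * μ (Prod.fst '' S) := by
        gcongr
        exact (support_measure_section_subset ν T).trans (Set.image_mono hTS)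

end FiberSquare

lemma nullMeasurableSet_image_of_det_ne_zero {E : Type*} [NormedAddCommGroup E] [NormedSpace ℝ E]
    [FiniteDimensional ℝ E] [MeasurableSpace E] [BorelSpace E] {μ : Measure E} [μ.IsAddHaarMeasure]
    {f : E →ₗ[ℝ] E} (hf : LinearMap.det f ≠ 0) {s : Set E} (hs : NullMeasurableSet s μ) :
    NullMeasurableSet (f '' s) μ := by
  let e : E ≃ₗ[ℝ] E := f.equivOfDetNeZero hf
  have image_eq : f '' s = e.symm ⁻¹' s := e.toEquiv.image_eq_preimage_symm s
  rw [image_eq]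
  exact hs.preimage
    (Measure.LinearMap.quasiMeasurePreserving μ e.symm.toLinearMap e.symm.isUnit_det'.ne_zero)

section PointPair

variable {R M : Type*} [CommRing R] [AddCommGroup M] [Module R M]

/-- The points `(x + t₀ξ, x + tξ)` at heights `t₀` and `t` of the line with direction `ξ` and base
point `x`, as a linear map in `(ξ, x)`: it parametrizes lines by two of their points. -/
def pointPair (t₀ t : R) : M × M →ₗ[R] M × M :=
  (LinearMap.snd R M M + t₀ • LinearMap.fst R M M).prod
    (LinearMap.snd R M M + t • LinearMap.fst R M M)

lemma det_pointPair [Module.Free R M] [Module.Finite R M] (t₀ t : R) :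
    LinearMap.det (pointPair t₀ t : M × M →ₗ[R] M × M) = (t₀ - t) ^ Module.finrank R M := by
  rcases subsingleton_or_nontrivial R with _ | _
  · exact Subsingleton.elim _ _
  let b := Module.finBasis R M
  have toMatrix_eq : LinearMap.toMatrix (b.prod b) (b.prod b) (pointPair t₀ t) =
      Matrix.fromBlocks (t₀ • 1) 1 (t • 1) 1 := by
    ext (i | i) (j | j) <;>
      simp [pointPair, LinearMap.toMatrix_apply, Matrix.one_apply, Finsupp.single_apply, eq_comm]
  rw [← LinearMap.det_toMatrix (b.prod b), toMatrix_eq, Matrix.det_fromBlocks_one₂₂, one_mul,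
    ← sub_smul, Matrix.det_smul, Matrix.det_one, mul_one, Fintype.card_fin]

end PointPair

theorem statement15_general {E : Type*} [NormedAddCommGroup E] [NormedSpace ℝ E]
    [FiniteDimensional ℝ E] [MeasurableSpace E] [BorelSpace E] (μ : Measure E)
    [μ.IsAddHaarMeasure] {G : Set (E × E)} (hG : NullMeasurableSet G (μ.prod μ)) {t₀ t : ℝ}
    (ht : t₀ ≠ t) :
    ENNReal.ofReal (|t₀ - t| ^ (2 * Module.finrank ℝ E)) * μ.prod μ G ^ 2 ≤
      μ.prod (μ.prod μ) {w : E × E × E |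
          ∃ p₁ ∈ G, ∃ p₂ ∈ G,
            p₁.2 + t₀ • p₁.1 = w.1 ∧ p₂.2 + t₀ • p₂.1 = w.1 ∧
            p₁.2 + t • p₁.1 = w.2.1 ∧ p₂.2 + t • p₂.1 = w.2.2} *
        μ {y | ∃ p ∈ G, y = p.2 + t₀ • p.1} := by
  have hdet : LinearMap.det (pointPair t₀ t : E × E →ₗ[ℝ] E × E) ≠ 0 := by
    rw [det_pointPair]
    exact pow_ne_zero _ (sub_ne_zero.2 ht)
  calc ENNReal.ofReal (|t₀ - t| ^ (2 * Module.finrank ℝ E)) * μ.prod μ G ^ 2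
      = μ.prod μ (pointPair t₀ t '' G) ^ 2 := by
        rw [Measure.addHaar_image_linearMap, det_pointPair, mul_pow, abs_pow,
          ← ENNReal.ofReal_pow (by positivity), ← pow_mul, mul_comm 2]
    _ ≤ μ.prod (μ.prod μ) (fiberSquare (pointPair t₀ t '' G)) *
          μ (Prod.fst '' (pointPair t₀ t '' G)) :=
        sq_measure_le_measure_fiberSquare_mul (nullMeasurableSet_image_of_det_ne_zero hdet hG)
    _ ≤ _ := by
        gcongr
        · rintro w ⟨⟨p₁, hp₁, h₁⟩, ⟨p₂, hp₂, h₂⟩⟩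
          obtain ⟨h₁₀, h₁t⟩ := Prod.ext_iff.1 h₁
          obtain ⟨h₂₀, h₂t⟩ := Prod.ext_iff.1 h₂
          exact ⟨p₁, hp₁, p₂, hp₂, h₁₀, h₂₀, h₁t, h₂t⟩
        · rintro _ ⟨_, ⟨p, hp, rfl⟩, rfl⟩
          exact ⟨p, hp, rfl⟩

/-- The Cauchy–Schwarz lower bound for the set `V` of pairs of lines meeting at a
common point of the slice at height `t₀`:
`ℒ^{3(d-1)}(V) ℒ^{d-1}(π_{t₀}(G)) ≥ |t₀ - t|^{2(d-1)} |G|²`. -/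
theorem statement15 (d : ℕ) (hd : 2 ≤ d) (G : Set (Euc (d - 1) × Euc (d - 1)))
    (hG : MeasurableSet G) (hGfin : volume G ≠ ⊤) (hmfin : mG G ≠ ⊤)
    (t₀ t : ℝ) (ht : t₀ ≠ t)
    (h₀ : volume (lineSlice G t₀) ≠ ⊤) (h₁ : volume (lineSlice G t) ≠ ⊤) :
    ENNReal.ofReal (|t₀ - t| ^ (2 * (d - 1))) * volume G ^ 2 ≤
      volume {w : Euc (d - 1) × Euc (d - 1) × Euc (d - 1) |
          ∃ p₁ ∈ G, ∃ p₂ ∈ G,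
            p₁.2 + t₀ • p₁.1 = w.1 ∧ p₂.2 + t₀ • p₂.1 = w.1 ∧
            p₁.2 + t • p₁.1 = w.2.1 ∧ p₂.2 + t • p₂.1 = w.2.2} *
        volume (lineSlice G t₀) := by
  simpa only [finrank_euclideanSpace_fin, Measure.volume_eq_prod, lineSlice] using
    statement15_general volume hG.nullMeasurableSet ht

end
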